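/- Let (X, μ) be a finite measure space and f ∈ L¹(X,μ) nonnegative. Then the set S_f = {Sf : S a semi-doubly stochastic operator on L¹(X,μ)} is relatively weakly compact in L¹(X,μ), i.e. the closure of S_f in the weak topology σ(L¹, L^∞) is weakly compact. -/

import Mathlib

open MeasureTheory

/-- `T : L¹(X,μ) → L¹(X,μ)` is a semi-doubly stochastic operator: it is positive,
integral preserving, and `∫_E T χ_B dμ ≤ μ(E)` for all measurable sets `E, B` of finite
measure. -/
def IsSemiDoublyStochastic {X : Type*} [MeasurableSpace X] {μ : Measure X}
    (T : Lp ℝ 1 μ →L[ℝ] Lp ℝ 1 μ) : Prop :=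
  (∀ f : Lp ℝ 1 μ, 0 ≤ᵐ[μ] (f : X → ℝ) → 0 ≤ᵐ[μ] (T f : X → ℝ)) ∧
  (∀ f : Lp ℝ 1 μ, ∫ x, (T f : X → ℝ) x ∂μ = ∫ x, (f : X → ℝ) x ∂μ) ∧
  (∀ E B : Set X, ∀ (_ : MeasurableSet E) (_ : μ E < ⊤) (hB : MeasurableSet B)
    (hBfin : μ B < ⊤),
    ∫ x in E, (T (indicatorConstLp 1 hB hBfin.ne (1 : ℝ)) : X → ℝ) x ∂μ ≤ (μ E).toReal)

/-!
The main tool is Grothendieck's criterion: a subset of a Banach space `E` is relatively weakly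
compact as soon as, for every `ε > 0`, it lies within `ε` of a relatively weakly compact set. Indeed
its weak-* closure in the bidual is then within `ε` of `E` for every `ε`, hence inside `E`, which is
norm closed there.

In `L¹` of a finite measure space, the functions bounded by a constant `M` form a relatively weakly
compact set, since they come from a ball of the Hilbert space `L²`. Semi-doubly stochastic operators
fix the constants, hence preserve the bound `|g| ≤ M`, and they are contractions of `L¹`. So if `g`
is bounded by `M` and `‖f - g‖ ≤ ε`, the whole orbit of `f` lies within `ε` of the functions bounded
by `M`.
-/

open scoped ENNReal Pointwise

section WeakCompactness

variable {𝕜 E F : Type*} [RCLike 𝕜] [NormedAddCommGroup E] [NormedSpace 𝕜 E]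
  [NormedAddCommGroup F] [NormedSpace 𝕜 F]

variable (𝕜) in
/-- A subset of a normed space is relatively weakly compact if its closure in the weak topology
is compact. The closure is taken in the type synonym `WeakSpace 𝕜 E`, so that `E` keeps its norm
topology. -/
def IsRelativelyWeaklyCompact (A : Set E) : Prop :=
  IsCompact (closure (toWeakSpace 𝕜 E '' A))

namespace IsRelativelyWeaklyCompact

theorem subset {A B : Set E} (hB : IsRelativelyWeaklyCompact 𝕜 B) (hAB : A ⊆ B) :
    IsRelativelyWeaklyCompact 𝕜 A :=
  hB.closure_of_subset ((Set.image_mono hAB).trans subset_closure)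

theorem image {A : Set E} (hA : IsRelativelyWeaklyCompact 𝕜 A) (T : E →L[𝕜] F) :
    IsRelativelyWeaklyCompact 𝕜 (T '' A) := by
  refine (IsCompact.image hA (WeakSpace.map T).continuous).closure_of_subset ?_
  rintro _ ⟨_, ⟨a, ha, rfl⟩, rfl⟩
  exact ⟨toWeakSpace 𝕜 E a, subset_closure ⟨a, ha, rfl⟩, rfl⟩

end IsRelativelyWeaklyCompact

theorem mem_range_inclusionInDoubleDualWeak_iff {y : WeakDual 𝕜 (StrongDual 𝕜 E)} :
    y ∈ Set.range (NormedSpace.inclusionInDoubleDualWeak 𝕜 E) ↔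
      WeakDual.toStrongDual y ∈ Set.range (NormedSpace.inclusionInDoubleDual 𝕜 E) :=
  Iff.rfl

theorem isRelativelyWeaklyCompact_closedBall_of_surjective_inclusionInDoubleDual
    (hE : Function.Surjective (NormedSpace.inclusionInDoubleDual 𝕜 E)) (r : ℝ) :
    IsRelativelyWeaklyCompact 𝕜 (Metric.closedBall (0 : E) r) := by
  refine NormedSpace.isCompact_closure_of_isBounded 𝕜 E _ ?_ ?_
  · rw [Set.preimage_image_eq _ (toWeakSpace 𝕜 E).injective]
    exact Metric.isBounded_closedBall
  · exact fun y _ => mem_range_inclusionInDoubleDualWeak_iff.2 (hE (WeakDual.toStrongDual y))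

theorem inclusionInDoubleDual_surjective_of_innerProductSpace {H : Type*}
    [NormedAddCommGroup H] [InnerProductSpace 𝕜 H] [CompleteSpace H] :
    Function.Surjective (NormedSpace.inclusionInDoubleDual 𝕜 H) := by
  intro y
  let toDual := InnerProductSpace.toDual 𝕜 H
  let conj : 𝕜 →L⋆[𝕜] 𝕜 := (starL 𝕜 : 𝕜 ≃L⋆[𝕜] 𝕜)
  let ℓ : StrongDual 𝕜 H := conj.comp (y.comp (toDual : H →L⋆[𝕜] StrongDual 𝕜 H))
  refine ⟨toDual.symm ℓ, ContinuousLinearMap.ext fun φ => ?_⟩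
  obtain ⟨z, rfl⟩ := toDual.surjective φ
  calc inner 𝕜 z (toDual.symm ℓ)
      = star (inner 𝕜 (toDual.symm ℓ) z) := (inner_conj_symm z _).symm
    _ = star (star (y (toDual z))) := by
        rw [InnerProductSpace.toDual_symm_apply]
        rfl
    _ = y (toDual z) := star_star _

/-- The closed ball of radius `r` around `0` in the bidual, as a set for the weak-* topology. -/
def bidualBall (𝕜 E : Type*) [RCLike 𝕜] [NormedAddCommGroup E] [NormedSpace 𝕜 E] (r : ℝ) :
    Set (WeakDual 𝕜 (StrongDual 𝕜 E)) :=
  WeakDual.toStrongDual ⁻¹' Metric.closedBall (0 : StrongDual 𝕜 (StrongDual 𝕜 E)) r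

theorem mem_bidualBall {y : WeakDual 𝕜 (StrongDual 𝕜 E)} {r : ℝ} :
    y ∈ bidualBall 𝕜 E r ↔ ‖WeakDual.toStrongDual y‖ ≤ r :=
  mem_closedBall_zero_iff (E := StrongDual 𝕜 (StrongDual 𝕜 E))

theorem isCompact_image_add_bidualBall {K : Set E} (hK : IsRelativelyWeaklyCompact 𝕜 K) (r : ℝ) :
    IsCompact (NormedSpace.inclusionInDoubleDualWeak 𝕜 E '' closure (toWeakSpace 𝕜 E '' K) +
      bidualBall 𝕜 E r) :=
  (IsCompact.image hK (NormedSpace.inclusionInDoubleDualWeak 𝕜 E).continuous).add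
    (WeakDual.isCompact_closedBall 0 r)

theorem closure_image_inclusionInDoubleDualWeak_subset_add_bidualBall {A K : Set E} {ε : ℝ}
    (hK : IsRelativelyWeaklyCompact 𝕜 K) (hA : ∀ a ∈ A, ∃ k ∈ K, ‖a - k‖ ≤ ε) :
    closure (NormedSpace.inclusionInDoubleDualWeak 𝕜 E '' (toWeakSpace 𝕜 E '' A)) ⊆
      NormedSpace.inclusionInDoubleDualWeak 𝕜 E '' closure (toWeakSpace 𝕜 E '' K) +
        bidualBall 𝕜 E ε := by
  refine closure_minimal ?_ (isCompact_image_add_bidualBall hK ε).isClosed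
  rintro _ ⟨_, ⟨a, ha, rfl⟩, rfl⟩
  obtain ⟨k, hk, hak⟩ := hA a ha
  refine ⟨_, ⟨toWeakSpace 𝕜 E k, subset_closure ⟨k, hk, rfl⟩, rfl⟩,
    NormedSpace.inclusionInDoubleDualWeak 𝕜 E (toWeakSpace 𝕜 E (a - k)), ?_, ?_⟩
  · exact mem_bidualBall.2 ((NormedSpace.double_dual_bound 𝕜 E (a - k)).trans hak)
  · simp only [← map_add, add_sub_cancel]

variable [CompleteSpace E]

theorem isClosed_range_inclusionInDoubleDual :
    IsClosed (Set.range (NormedSpace.inclusionInDoubleDual 𝕜 E)) :=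
  have hJ := (NormedSpace.inclusionInDoubleDualLi (E := E) 𝕜).isometry
  hJ.isUniformInducing.isComplete_range.isClosed

theorem mem_range_inclusionInDoubleDualWeak_of_forall_mem_add_bidualBall
    {y : WeakDual 𝕜 (StrongDual 𝕜 E)}
    (hy : ∀ ε > 0, y ∈ Set.range (NormedSpace.inclusionInDoubleDualWeak 𝕜 E) + bidualBall 𝕜 E ε) :
    y ∈ Set.range (NormedSpace.inclusionInDoubleDualWeak 𝕜 E) := by
  rw [mem_range_inclusionInDoubleDualWeak_iff, ← isClosed_range_inclusionInDoubleDual.closure_eq]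
  refine (Metric.mem_closure_iff (α := StrongDual 𝕜 (StrongDual 𝕜 E))).2 fun ε hε => ?_
  obtain ⟨_, ⟨x, rfl⟩, b, hb, rfl⟩ := hy (ε / 2) (half_pos hε)
  refine ⟨_, ⟨(toWeakSpace 𝕜 E).symm x, rfl⟩, ?_⟩
  calc dist (α := StrongDual 𝕜 (StrongDual 𝕜 E)) _ _
      = ‖WeakDual.toStrongDual b‖ :=
        (dist_eq_norm (E := StrongDual 𝕜 (StrongDual 𝕜 E)) _ _).trans
          (congrArg norm (add_sub_cancel_left _ _))
    _ ≤ ε / 2 := mem_bidualBall.1 hb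
    _ < ε := half_lt_self hε

theorem isRelativelyWeaklyCompact_of_forall_approx {A : Set E}
    (hA : ∀ ε > 0, ∃ K : Set E, IsRelativelyWeaklyCompact 𝕜 K ∧ ∀ a ∈ A, ∃ k ∈ K, ‖a - k‖ ≤ ε) :
    IsRelativelyWeaklyCompact 𝕜 A := by
  have hemb := NormedSpace.isEmbedding_inclusionInDoubleDualWeak 𝕜 E
  have hrange : closure (NormedSpace.inclusionInDoubleDualWeak 𝕜 E '' (toWeakSpace 𝕜 E '' A)) ⊆
      Set.range (NormedSpace.inclusionInDoubleDualWeak 𝕜 E) := fun y hy =>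
    mem_range_inclusionInDoubleDualWeak_of_forall_mem_add_bidualBall fun ε hε => by
      obtain ⟨K, hK, hAK⟩ := hA ε hε
      exact Set.add_subset_add_right (Set.image_subset_range _ _)
        (closure_image_inclusionInDoubleDualWeak_subset_add_bidualBall hK hAK hy)
  obtain ⟨K, hK, hAK⟩ := hA 1 one_pos
  have hcompact : IsCompact
      (closure (NormedSpace.inclusionInDoubleDualWeak 𝕜 E '' (toWeakSpace 𝕜 E '' A))) :=
    (isCompact_image_add_bidualBall hK 1).of_isClosed_subset isClosed_closure
      (closure_image_inclusionInDoubleDualWeak_subset_add_bidualBall hK hAK)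
  rw [IsRelativelyWeaklyCompact, hemb.closure_eq_preimage_closure_image]
  exact hemb.isCompact_preimage' hcompact hrange

end WeakCompactness

section BoundedFunctions

variable {X E : Type*} [MeasurableSpace X] {μ : Measure X} {p q : ℝ≥0∞} [NormedAddCommGroup E]

theorem exists_ae_norm_le_norm_sub_le [Fact (1 ≤ p)] (hp : p ≠ ∞) (f : Lp E p μ) {ε : ℝ}
    (hε : 0 < ε) : ∃ (M : ℝ) (g : Lp E p μ), (∀ᵐ x ∂μ, ‖g x‖ ≤ M) ∧ ‖f - g‖ ≤ ε := by
  obtain ⟨g, hfg⟩ := (Lp.simpleFunc.denseRange (E := E) (μ := μ) hp).exists_dist_lt f hε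
  obtain ⟨M, hM⟩ := (Lp.simpleFunc.toSimpleFunc g).exists_forall_norm_le
  refine ⟨M, g, ?_, (dist_eq_norm f (g : Lp E p μ)).symm.trans_le hfg.le⟩
  filter_upwards [Lp.simpleFunc.toSimpleFunc_eq_toFun g] with x hx
  exact hx ▸ hM x

variable [IsFiniteMeasure μ] [Fact (1 ≤ p)]

theorem norm_inclusion_antitone_le (hpq : p ≤ q) (g : Lp E q μ) :
    ‖AddSubgroup.inclusion (Lp.antitone hpq) g‖ ≤
      μ.real Set.univ ^ (1 / p.toReal - 1 / q.toReal) * ‖g‖ := by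
  have hexp : 0 ≤ 1 / p.toReal - 1 / q.toReal := by
    rcases eq_or_ne q ∞ with rfl | hq
    · simp
    · exact sub_nonneg.2 (one_div_le_one_div_of_le
        (ENNReal.toReal_pos (zero_lt_one.trans_le Fact.out).ne' (hpq.trans_lt hq.lt_top).ne)
        (ENNReal.toReal_mono hq hpq))
  have htop : eLpNorm g q μ * μ Set.univ ^ (1 / p.toReal - 1 / q.toReal) ≠ ∞ :=
    ENNReal.mul_ne_top (Lp.eLpNorm_ne_top g)
      (ENNReal.rpow_ne_top_of_nonneg hexp (measure_ne_top μ _))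
  calc ‖AddSubgroup.inclusion (Lp.antitone hpq) g‖ = (eLpNorm g p μ).toReal := rfl
    _ ≤ (eLpNorm g q μ * μ Set.univ ^ (1 / p.toReal - 1 / q.toReal)).toReal :=
      ENNReal.toReal_mono htop
        (eLpNorm_le_eLpNorm_mul_rpow_measure_univ hpq (Lp.aestronglyMeasurable g))
    _ = μ.real Set.univ ^ (1 / p.toReal - 1 / q.toReal) * ‖g‖ := by
      rw [ENNReal.toReal_mul, ← ENNReal.toReal_rpow, mul_comm, Lp.norm_def, Measure.real]

variable {𝕜 : Type*} [RCLike 𝕜]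

section Inclusion

variable [Fact (1 ≤ q)] [NormedSpace 𝕜 E]

variable (𝕜) in
/-- The inclusion of `L^q` into `L^p`, for `p ≤ q` and a finite measure, as a continuous linear
map. -/
noncomputable def lpInclusion (hpq : p ≤ q) : Lp E q μ →L[𝕜] Lp E p μ :=
  LinearMap.mkContinuous
    { AddSubgroup.inclusion (Lp.antitone hpq) with map_smul' := fun _ _ => rfl }
    (μ.real Set.univ ^ (1 / p.toReal - 1 / q.toReal)) (norm_inclusion_antitone_le hpq)

theorem lpInclusion_toLp (hpq : p ≤ q) {g : Lp E p μ} (hg : MemLp g q μ) :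
    lpInclusion 𝕜 hpq (hg.toLp g) = g :=
  Lp.ext hg.coeFn_toLp

end Inclusion

theorem isRelativelyWeaklyCompact_setOf_ae_norm_le [InnerProductSpace 𝕜 E] [CompleteSpace E]
    (hp : p ≤ 2) (M : ℝ) :
    IsRelativelyWeaklyCompact 𝕜 {g : Lp E p μ | ∀ᵐ x ∂μ, ‖g x‖ ≤ M} := by
  have hball := isRelativelyWeaklyCompact_closedBall_of_surjective_inclusionInDoubleDual
    (inclusionInDoubleDual_surjective_of_innerProductSpace (𝕜 := 𝕜) (H := Lp E 2 μ))
    (measureUnivNNReal μ ^ (2 : ℝ≥0∞).toReal⁻¹ * |M|)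
  refine (hball.image (lpInclusion 𝕜 hp)).subset fun g hg => ?_
  have hg₂ : MemLp g 2 μ := MemLp.of_bound (Lp.aestronglyMeasurable g) M hg
  refine ⟨hg₂.toLp g, mem_closedBall_zero_iff.2 ?_, lpInclusion_toLp hp hg₂⟩
  refine Lp.norm_le_of_ae_bound (abs_nonneg M) ?_
  filter_upwards [hg₂.coeFn_toLp, hg] with x hx hgx
  exact hx ▸ hgx.trans (le_abs_self M)

end BoundedFunctions

section PositiveOperators

theorem abs_map_le_map_abs_of_monotone {G H F : Type*} [AddCommGroup G] [Lattice G] [AddCommGroup H]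
    [Lattice H] [FunLike F G H] [AddMonoidHomClass F G H]
    {T : F} (hT : Monotone T) (g : G) : |T g| ≤ T |g| :=
  abs_le'.2 ⟨hT (le_abs_self g), map_neg T g ▸ hT (neg_le_abs g)⟩

variable {X Y F : Type*} [MeasurableSpace X] [MeasurableSpace Y] {μ : Measure X} {ν : Measure Y}

theorem L1_norm_eq_integral_of_nonneg {f : Lp ℝ 1 μ} (hf : 0 ≤ f) : ‖f‖ = ∫ x, f x ∂μ := by
  rw [L1.norm_eq_integral_norm]
  refine integral_congr_ae ?_
  filter_upwards [(Lp.coeFn_nonneg f).2 hf] with x hx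
  exact Real.norm_of_nonneg hx

theorem L1_norm_map_le_of_monotone [FunLike F (Lp ℝ 1 μ) (Lp ℝ 1 ν)]
    [AddMonoidHomClass F (Lp ℝ 1 μ) (Lp ℝ 1 ν)] {T : F} (hT : Monotone T)
    (hint : ∀ f, 0 ≤ f → ∫ y, T f y ∂ν ≤ ∫ x, f x ∂μ) (f : Lp ℝ 1 μ) : ‖T f‖ ≤ ‖f‖ := by
  have habs := abs_map_le_map_abs_of_monotone hT f
  calc ‖T f‖ ≤ ‖T |f|‖ := norm_le_norm_of_abs_le_abs (habs.trans (le_abs_self _))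
    _ = ∫ y, T |f| y ∂ν := L1_norm_eq_integral_of_nonneg ((abs_nonneg _).trans habs)
    _ ≤ ∫ x, |f| x ∂μ := hint _ (abs_nonneg f)
    _ = ‖|f|‖ := (L1_norm_eq_integral_of_nonneg (abs_nonneg f)).symm
    _ = ‖f‖ := norm_abs_eq_norm f

end PositiveOperators

namespace IsSemiDoublyStochastic

variable {X : Type*} [MeasurableSpace X] {μ : Measure X} {S : Lp ℝ 1 μ →L[ℝ] Lp ℝ 1 μ}

theorem monotone (hS : IsSemiDoublyStochastic S) : Monotone S := by
  intro f g hfg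
  rw [← sub_nonneg, ← map_sub, ← Lp.coeFn_nonneg]
  exact hS.1 _ ((Lp.coeFn_nonneg _).2 (sub_nonneg.2 hfg))

theorem norm_map_le (hS : IsSemiDoublyStochastic S) (f : Lp ℝ 1 μ) : ‖S f‖ ≤ ‖f‖ :=
  L1_norm_map_le_of_monotone hS.monotone (fun f _ => (hS.2.1 f).le) f

variable [IsFiniteMeasure μ]

theorem map_const (hS : IsSemiDoublyStochastic S) (c : ℝ) :
    S (Lp.const 1 μ c) = Lp.const 1 μ c := by
  have hone : S (Lp.const 1 μ 1) = Lp.const 1 μ 1 := by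
    have hle : S (Lp.const 1 μ 1) ≤ᵐ[μ] Lp.const 1 μ (1 : ℝ) := by
      refine ae_le_of_forall_setIntegral_le (L1.integrable_coeFn _) (L1.integrable_coeFn _) ?_
      intro E hE hμE
      calc ∫ x in E, S (Lp.const 1 μ 1) x ∂μ ≤ μ.real E := by
            simpa only [indicatorConstLp_univ] using!
              hS.2.2 E Set.univ hE hμE .univ (measure_lt_top μ _)
        _ = ∫ x in E, Lp.const 1 μ (1 : ℝ) x ∂μ := by
            simp [integral_congr_ae (ae_restrict_of_ae (Lp.coeFn_const 1 μ (1 : ℝ))),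
              -Lp.const_val]
    exact Lp.ext ((integral_eq_iff_of_ae_le (L1.integrable_coeFn _) (L1.integrable_coeFn _)
      hle).1 (hS.2.1 _))
  have hc : Lp.const 1 μ c = c • Lp.const 1 μ (1 : ℝ) := by
    simpa using (Lp.constₗ 1 μ ℝ).map_smul c (1 : ℝ)
  rw [hc, map_smul, hone]

theorem ae_norm_map_le (hS : IsSemiDoublyStochastic S) {M : ℝ} {g : Lp ℝ 1 μ}
    (hg : ∀ᵐ x ∂μ, ‖g x‖ ≤ M) : ∀ᵐ x ∂μ, ‖S g x‖ ≤ M := by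
  have hgM : |g| ≤ Lp.const 1 μ M := by
    rw [← Lp.coeFn_le]
    filter_upwards [Lp.coeFn_abs g, Lp.coeFn_const 1 μ M, hg] with x h₁ h₂ h₃
    rwa [h₁, h₂]
  have hSg : |S g| ≤ Lp.const 1 μ M :=
    calc |S g| ≤ S |g| := abs_map_le_map_abs_of_monotone hS.monotone g
      _ ≤ S (Lp.const 1 μ M) := hS.monotone hgM
      _ = Lp.const 1 μ M := hS.map_const M
  filter_upwards [(Lp.coeFn_le _ _).2 hSg, Lp.coeFn_abs (S g), Lp.coeFn_const 1 μ M]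
    with x h₁ h₂ h₃
  rwa [h₂, h₃] at h₁

end IsSemiDoublyStochastic

theorem relativelyWeaklyCompact_semiDoublyStochastic_orbit_general
    {X : Type*} [MeasurableSpace X] {μ : Measure X} [IsFiniteMeasure μ] (f : Lp ℝ 1 μ) :
    IsRelativelyWeaklyCompact ℝ
      {g : Lp ℝ 1 μ | ∃ S : Lp ℝ 1 μ →L[ℝ] Lp ℝ 1 μ, IsSemiDoublyStochastic S ∧ S f = g} := by
  refine isRelativelyWeaklyCompact_of_forall_approx fun ε hε => ?_
  obtain ⟨M, g, hgM, hfg⟩ := exists_ae_norm_le_norm_sub_le ENNReal.one_ne_top f hε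
  refine ⟨_, isRelativelyWeaklyCompact_setOf_ae_norm_le one_le_two M, ?_⟩
  rintro _ ⟨S, hS, rfl⟩
  refine ⟨S g, hS.ae_norm_map_le hgM, ?_⟩
  calc ‖S f - S g‖ = ‖S (f - g)‖ := by rw [map_sub]
    _ ≤ ‖f - g‖ := hS.norm_map_le (f - g)
    _ ≤ ε := hfg

/-- For a finite measure space `(X,μ)` and a nonnegative `f ∈ L¹(X,μ)`, the set
`S_f = {Sf : S semi-doubly stochastic}` is relatively weakly compact in `L¹(X,μ)`:
its closure in the weak topology `σ(L¹, L^∞)` (the weak topology of the Banach space `L¹`,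
whose dual for finite measures is `L^∞`) is compact. -/
theorem relativelyWeaklyCompact_semiDoublyStochastic_orbit
    {X : Type*} [MeasurableSpace X] (μ : Measure X) [IsFiniteMeasure μ]
    (f : Lp ℝ 1 μ) (hf : 0 ≤ᵐ[μ] (f : X → ℝ)) :
    IsCompact (closure
      (toWeakSpace ℝ (Lp ℝ 1 μ) ''
        {g : Lp ℝ 1 μ | ∃ S : Lp ℝ 1 μ →L[ℝ] Lp ℝ 1 μ, IsSemiDoublyStochastic S ∧ S f = g})) :=
  relativelyWeaklyCompact_semiDoublyStochastic_orbit_general f
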